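/- There exists a constant C depending only on m and δ such that for every measurable Z : ℝ² → ℂ the following three estimates hold: (i) ‖⟨k⟩^{−1/2}·Z‖_{L¹(ℝ²)} ≤ C·‖⟨k⟩^m·min(|k|^{1/4},1)·Z‖_{L²_k L¹_η} ≤ C·μ^{−1/4}·D_γ^{1/4}·( E^{1/2} + μ^{−δ}·D_γ^{δ}·E^{1/2−2δ} ); (ii) ‖⟨k⟩^m·Z‖_{L²_k L¹_η} ≤ C·( μ^{−1/8}·D_γ^{1/8}·E^{3/4} + μ^{−1/4−δ}·D_γ^{1/4+δ}·E^{1/2−2δ} ); (iii) ‖A(k)^{2δ}·⟨k⟩^{−1/2}·Z‖_{L¹(ℝ²)} ≤ C·μ^{−1/4}·(1 + μ^{−δ})·D_γ^{1/4}·E^{1/2}. -/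

import Mathlib

open MeasureTheory Real
open scoped ENNReal NNReal

noncomputable section

/-- The Japanese bracket `⟨k⟩ = (1+k²)^{1/2}`. -/
def jap (k : ℝ) : ℝ := Real.sqrt (1 + k ^ 2)

/-- The moving-frame symbol `p(k,η) = k² + (η − kt)²`. -/
def pw (t k η : ℝ) : ℝ := k ^ 2 + (η - k * t) ^ 2

/-- The weight `A(k)`. -/
def Aw (μ k : ℝ) : ℝ :=
  if |k| < μ then 1 else μ ^ ((1 : ℝ) / 3) * |k| ^ (-(1 : ℝ) / 3)

/-- The weight `B(k)`. -/
def Bw (μ k : ℝ) : ℝ :=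
  if |k| < μ then μ ^ (-(1 : ℝ) / 2) else μ ^ ((1 : ℝ) / 6) * |k| ^ (-(2 : ℝ) / 3)

/-- Weighted `L¹(ℝ²)` norm `‖w·Z‖_{L¹}` (iterated, value in `[0,∞]`). -/
def L1n (w : ℝ → ℝ → ℝ) (Z : ℝ × ℝ → ℂ) : ℝ≥0∞ :=
  ∫⁻ k : ℝ, ∫⁻ η : ℝ, ENNReal.ofReal (w k η) * (‖Z (k, η)‖₊ : ℝ≥0∞)

/-- Weighted `L²(ℝ²)` norm `‖w·Z‖_{L²}` (value in `[0,∞]`). -/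
def L2n (w : ℝ → ℝ → ℝ) (Z : ℝ × ℝ → ℂ) : ℝ≥0∞ :=
  (∫⁻ k : ℝ, ∫⁻ η : ℝ,
      (ENNReal.ofReal (w k η) * (‖Z (k, η)‖₊ : ℝ≥0∞)) ^ 2) ^ ((1 : ℝ) / 2)

/-- Weighted mixed norm `‖w·Z‖_{L²_k L¹_η}` (value in `[0,∞]`). -/
def L2L1n (w : ℝ → ℝ → ℝ) (Z : ℝ × ℝ → ℂ) : ℝ≥0∞ :=
  (∫⁻ k : ℝ,
      (∫⁻ η : ℝ, ENNReal.ofReal (w k η) * (‖Z (k, η)‖₊ : ℝ≥0∞)) ^ 2) ^ ((1 : ℝ) / 2)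

/-- The energy `E = ‖⟨k⟩^m Z‖_{L²} + ‖⟨k⟩^m A(k)(η−kt) Z‖_{L²}`. -/
def En (t μ m : ℝ) (Z : ℝ × ℝ → ℂ) : ℝ≥0∞ :=
  L2n (fun k _ => jap k ^ m) Z + L2n (fun k η => jap k ^ m * Aw μ k * |η - k * t|) Z

/-- The dissipation `D_γ = μ·∬ ⟨k⟩^{2m} p |Z|²`. -/
def Dg (t μ m : ℝ) (Z : ℝ × ℝ → ℂ) : ℝ≥0∞ :=
  ENNReal.ofReal μ * ∫⁻ k : ℝ, ∫⁻ η : ℝ,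
    ENNReal.ofReal (jap k ^ (2 * m) * pw t k η) * (‖Z (k, η)‖₊ : ℝ≥0∞) ^ 2

/-- The dissipation `D_τ = ∬ ⟨k⟩^{2m} k² p⁻¹ |Z|²`. -/
def Dtau (t m : ℝ) (Z : ℝ × ℝ → ℂ) : ℝ≥0∞ :=
  ∫⁻ k : ℝ, ∫⁻ η : ℝ,
    ENNReal.ofReal (jap k ^ (2 * m) * k ^ 2 / pw t k η) * (‖Z (k, η)‖₊ : ℝ≥0∞) ^ 2

/-- The dissipation `D_α = μ·∬ ⟨k⟩^{2m} A(k)² (η−kt)² p |Z|²`. -/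
def Dal (t μ m : ℝ) (Z : ℝ × ℝ → ℂ) : ℝ≥0∞ :=
  ENNReal.ofReal μ * ∫⁻ k : ℝ, ∫⁻ η : ℝ,
    ENNReal.ofReal (jap k ^ (2 * m) * Aw μ k ^ 2 * (η - k * t) ^ 2 * pw t k η)
      * (‖Z (k, η)‖₊ : ℝ≥0∞) ^ 2

/-- The dissipation `D_{τα} = ∬ ⟨k⟩^{2m} A(k)² k² (η−kt)² p⁻¹ |Z|²`. -/
def Dta (t μ m : ℝ) (Z : ℝ × ℝ → ℂ) : ℝ≥0∞ :=
  ∫⁻ k : ℝ, ∫⁻ η : ℝ,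
    ENNReal.ofReal (jap k ^ (2 * m) * Aw μ k ^ 2 * k ^ 2 * (η - k * t) ^ 2 / pw t k η)
      * (‖Z (k, η)‖₊ : ℝ≥0∞) ^ 2

/-- The dissipation `D_β = ∬ ⟨k⟩^{2m} B(k)² k² |Z|²`. -/
def Db (t μ m : ℝ) (Z : ℝ × ℝ → ℂ) : ℝ≥0∞ :=
  ∫⁻ k : ℝ, ∫⁻ η : ℝ,
    ENNReal.ofReal (jap k ^ (2 * m) * Bw μ k ^ 2 * k ^ 2) * (‖Z (k, η)‖₊ : ℝ≥0∞) ^ 2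

/-!
For fixed `k`, Carlson's inequality `(∫ g)² ≤ 2π ‖g‖₂ ‖(x - c) g‖₂` with `c = kt` turns the inner
`L¹_η` norm into two `L²_η` norms, one of which carries the weight `|η - kt| ≤ √p`. Cauchy–Schwarz
in `k` then gives `‖⟨k⟩^m Z‖_{L²_k L¹_η} ≲ (D_γ / μ)^{1/4} E^{1/2}`. Everything else reduces to
this estimate: the passage from `L¹` to `L²_k L¹_η` is Cauchy–Schwarz against a function of `k` that
is square integrable because `m > 0` and `1/4 < 1/2`, and the two-term bound in (ii) compares
`D_γ / μ` with `E²`.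
-/

section CauchySchwarz

variable {α : Type*} [MeasurableSpace α] {ν : Measure α}

lemma sq_lintegral_le_integral_inv_mul {v : α → ℝ} {g : α → ℝ≥0∞} (hv : ∀ᵐ x ∂ν, 0 < v x)
    (hv_int : Integrable (fun x => (v x)⁻¹) ν) (hg : AEMeasurable g ν) :
    (∫⁻ x, g x ∂ν) ^ 2 ≤
      ENNReal.ofReal (∫ x, (v x)⁻¹ ∂ν) * ∫⁻ x, ENNReal.ofReal (v x) * g x ^ 2 ∂ν := by
  have hv_meas : AEMeasurable v ν := by simpa using hv_int.aemeasurable.fun_inv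
  have hv_inv : ENNReal.ofReal (∫ x, (v x)⁻¹ ∂ν) = ∫⁻ x, ENNReal.ofReal (v x)⁻¹ ∂ν :=
    ofReal_integral_eq_lintegral_ofReal hv_int (hv.mono fun _ hx => inv_nonneg.2 hx.le)
  have hg_split : ∫⁻ x, g x ∂ν = ∫⁻ x, ENNReal.ofReal (v x)⁻¹ ^ (1 / 2 : ℝ) *
      (ENNReal.ofReal (v x) * g x ^ 2) ^ (1 / 2 : ℝ) ∂ν := by
    refine lintegral_congr_ae (hv.mono fun x hx => ?_)
    dsimp only
    rw [← ENNReal.mul_rpow_of_nonneg _ _ (by norm_num), ← mul_assoc,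
      ← ENNReal.ofReal_mul (inv_nonneg.2 hx.le), inv_mul_cancel₀ hx.ne', ENNReal.ofReal_one,
      one_mul, ← ENNReal.rpow_two, ← ENNReal.rpow_mul]
    norm_num
  calc (∫⁻ x, g x ∂ν) ^ 2
      ≤ ((∫⁻ x, ENNReal.ofReal (v x)⁻¹ ∂ν) ^ (1 / 2 : ℝ) *
          (∫⁻ x, ENNReal.ofReal (v x) * g x ^ 2 ∂ν) ^ (1 / 2 : ℝ)) ^ 2 := by
        rw [hg_split]
        gcongr
        exact ENNReal.lintegral_mul_norm_pow_le (by fun_prop) (by fun_prop) (by norm_num)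
          (by norm_num) (by norm_num)
    _ = ENNReal.ofReal (∫ x, (v x)⁻¹ ∂ν) * ∫⁻ x, ENNReal.ofReal (v x) * g x ^ 2 ∂ν := by
        rw [hv_inv, mul_pow, ← ENNReal.rpow_two, ← ENNReal.rpow_two, ← ENNReal.rpow_mul,
          ← ENNReal.rpow_mul]
        norm_num

lemma lintegral_eq_zero_of_lintegral_mul_sq {w g : α → ℝ≥0∞} (hw : ∀ᵐ x ∂ν, w x ≠ 0)
    (hw_meas : AEMeasurable w ν) (hg : AEMeasurable g ν) (h : ∫⁻ x, w x * g x ^ 2 ∂ν = 0) :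
    ∫⁻ x, g x ∂ν = 0 := by
  rw [lintegral_eq_zero_iff' (by fun_prop)] at h
  rw [lintegral_eq_zero_iff' hg]
  filter_upwards [h, hw] with x hx hwx
  simpa [hwx] using hx

end CauchySchwarz

section Carlson

lemma inv_add_mul_sq_eq {a b : ℝ} (ha : 0 < a) (hb : 0 ≤ b) (x : ℝ) :
    (a + b * x ^ 2)⁻¹ = a⁻¹ * (1 + (√(b / a) * x) ^ 2)⁻¹ := by
  rw [← mul_inv, mul_pow, Real.sq_sqrt (by positivity)]
  congr 1
  field_simp

lemma integrable_inv_add_mul_sub_sq {a b : ℝ} (ha : 0 < a) (hb : 0 < b) (c : ℝ) :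
    Integrable fun x : ℝ => (a + b * (x - c) ^ 2)⁻¹ := by
  simp only [inv_add_mul_sq_eq ha hb.le]
  exact ((integrable_inv_one_add_sq.comp_mul_left'
    (by positivity : √(b / a) ≠ 0)).comp_sub_right c).const_mul a⁻¹

lemma integral_inv_add_mul_sub_sq {a b : ℝ} (ha : 0 < a) (hb : 0 < b) (c : ℝ) :
    ∫ x : ℝ, (a + b * (x - c) ^ 2)⁻¹ = π / √(a * b) := by
  simp only [inv_add_mul_sq_eq ha hb.le]
  rw [integral_const_mul, integral_sub_right_eq_self (fun x : ℝ => (1 + (√(b / a) * x) ^ 2)⁻¹) c,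
    Measure.integral_comp_mul_left (fun x : ℝ => (1 + x ^ 2)⁻¹), integral_univ_inv_one_add_sq,
    abs_of_pos (by positivity), smul_eq_mul, Real.sqrt_div hb.le, Real.sqrt_mul ha.le]
  nth_rewrite 1 [← Real.mul_self_sqrt ha.le]
  field_simp

/- Hardy's choice of weight: Cauchy–Schwarz against `q + p (x - c)²`. -/
lemma sq_lintegral_le_of_lintegral_sq_eq {c p q : ℝ} (hp : 0 < p) (hq : 0 < q) {g : ℝ → ℝ≥0∞}
    (hg : AEMeasurable g) (hgp : ∫⁻ x, g x ^ 2 = ENNReal.ofReal p)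
    (hgq : ∫⁻ x, ENNReal.ofReal ((x - c) ^ 2) * g x ^ 2 = ENNReal.ofReal q) :
    (∫⁻ x, g x) ^ 2 ≤ ENNReal.ofReal (2 * π * (√p * √q)) := by
  have h_weighted : ∫⁻ x, ENNReal.ofReal (q + p * (x - c) ^ 2) * g x ^ 2 =
      ENNReal.ofReal (2 * (p * q)) := by
    calc ∫⁻ x, ENNReal.ofReal (q + p * (x - c) ^ 2) * g x ^ 2
        = ∫⁻ x, (ENNReal.ofReal q * g x ^ 2 +
            ENNReal.ofReal p * (ENNReal.ofReal ((x - c) ^ 2) * g x ^ 2)) := by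
          refine lintegral_congr fun x => ?_
          rw [ENNReal.ofReal_add hq.le (by positivity), ENNReal.ofReal_mul hp.le, add_mul,
            mul_assoc]
      _ = ENNReal.ofReal q * ENNReal.ofReal p + ENNReal.ofReal p * ENNReal.ofReal q := by
          rw [lintegral_add_left' (by fun_prop), lintegral_const_mul'' _ (by fun_prop),
            lintegral_const_mul'' _ (by fun_prop), hgp, hgq]
      _ = ENNReal.ofReal (2 * (p * q)) := by
          rw [← ENNReal.ofReal_mul hq.le, ← ENNReal.ofReal_mul hp.le,
            ← ENNReal.ofReal_add (by positivity) (by positivity)]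
          ring_nf
  refine (sq_lintegral_le_integral_inv_mul (Filter.Eventually.of_forall fun x => by positivity)
    (integrable_inv_add_mul_sub_sq hq hp c) hg).trans_eq ?_
  rw [integral_inv_add_mul_sub_sq hq hp, h_weighted, ← ENNReal.ofReal_mul (by positivity),
    ← Real.sqrt_mul hp.le, mul_comm q p]
  congr 1
  nth_rewrite 2 [← Real.mul_self_sqrt (by positivity : 0 ≤ p * q)]
  field_simp

lemma carlson_inequality (c : ℝ) {g : ℝ → ℝ≥0∞} (hg : AEMeasurable g) :
    (∫⁻ x, g x) ^ 2 ≤ ENNReal.ofReal (2 * π) * ((∫⁻ x, g x ^ 2) ^ (1 / 2 : ℝ) *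
      (∫⁻ x, ENNReal.ofReal ((x - c) ^ 2) * g x ^ 2) ^ (1 / 2 : ℝ)) := by
  set P := ∫⁻ x, g x ^ 2
  set Q := ∫⁻ x, ENNReal.ofReal ((x - c) ^ 2) * g x ^ 2
  have h_const : ENNReal.ofReal (2 * π) ≠ 0 := (ENNReal.ofReal_pos.2 (by positivity)).ne'
  rcases eq_or_ne P 0 with hP0 | hP0
  · simp [lintegral_eq_zero_of_lintegral_mul_sq (w := 1) (by simp) aemeasurable_one hg
      (by simpa using hP0)]
  rcases eq_or_ne Q 0 with hQ0 | hQ0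
  · have hw : ∀ᵐ x : ℝ, ENNReal.ofReal ((x - c) ^ 2) ≠ 0 := by
      filter_upwards [Measure.ae_ne volume c] with x hx
      have : x - c ≠ 0 := sub_ne_zero.2 hx
      exact (ENNReal.ofReal_pos.2 (by positivity)).ne'
    simp [lintegral_eq_zero_of_lintegral_mul_sq hw (by fun_prop) hg hQ0]
  rcases eq_or_ne P ⊤ with hPt | hPt
  · simp [hPt, hQ0, ENNReal.mul_top h_const, -ENNReal.ofReal_mul]
  rcases eq_or_ne Q ⊤ with hQt | hQt
  · simp [hQt, hP0, ENNReal.mul_top h_const, -ENNReal.ofReal_mul]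
  have hp := ENNReal.toReal_pos hP0 hPt
  have hq := ENNReal.toReal_pos hQ0 hQt
  refine (sq_lintegral_le_of_lintegral_sq_eq hp hq hg (ENNReal.ofReal_toReal hPt).symm
    (ENNReal.ofReal_toReal hQt).symm).trans_eq ?_
  rw [ENNReal.ofReal_mul (p := 2 * π) (by positivity), ENNReal.ofReal_mul (Real.sqrt_nonneg _),
    Real.sqrt_eq_rpow, Real.sqrt_eq_rpow, ← ENNReal.ofReal_rpow_of_pos hp,
    ← ENNReal.ofReal_rpow_of_pos hq, ENNReal.ofReal_toReal hPt, ENNReal.ofReal_toReal hQt]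

lemma lintegral_sq_lintegral_le {α : Type*} [MeasurableSpace α] {ν : Measure α}
    {f : α → ℝ → ℝ≥0∞} {c : α → ℝ} (hf : Measurable (Function.uncurry f)) (hc : Measurable c) :
    ∫⁻ a, (∫⁻ x, f a x) ^ 2 ∂ν ≤ ENNReal.ofReal (2 * π) *
      ((∫⁻ a, (∫⁻ x, f a x ^ 2) ∂ν) ^ (1 / 2 : ℝ) *
        (∫⁻ a, (∫⁻ x, ENNReal.ofReal ((x - c a) ^ 2) * f a x ^ 2) ∂ν) ^ (1 / 2 : ℝ)) := by
  have hf_sq : Measurable fun a => ∫⁻ x, f a x ^ 2 := (hf.pow_const 2).lintegral_prod_right'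
  have hf_moment : Measurable fun a => ∫⁻ x, ENNReal.ofReal ((x - c a) ^ 2) * f a x ^ 2 := by
    have : Measurable fun y : α × ℝ =>
        ENNReal.ofReal ((y.2 - c y.1) ^ 2) * Function.uncurry f y ^ 2 := by fun_prop
    exact this.lintegral_prod_right'
  calc ∫⁻ a, (∫⁻ x, f a x) ^ 2 ∂ν
      ≤ ∫⁻ a, ENNReal.ofReal (2 * π) * ((∫⁻ x, f a x ^ 2) ^ (1 / 2 : ℝ) *
          (∫⁻ x, ENNReal.ofReal ((x - c a) ^ 2) * f a x ^ 2) ^ (1 / 2 : ℝ)) ∂ν :=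
        lintegral_mono fun a => carlson_inequality (c a) (hf.of_uncurry_left (x := a)).aemeasurable
    _ = ENNReal.ofReal (2 * π) * ∫⁻ a, (∫⁻ x, f a x ^ 2) ^ (1 / 2 : ℝ) *
          (∫⁻ x, ENNReal.ofReal ((x - c a) ^ 2) * f a x ^ 2) ^ (1 / 2 : ℝ) ∂ν :=
        lintegral_const_mul _ (by fun_prop)
    _ ≤ _ := by
        gcongr
        exact ENNReal.lintegral_mul_norm_pow_le hf_sq.aemeasurable hf_moment.aemeasurable
          one_half_pos.le one_half_pos.le (add_halves 1)

end Carlson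

section ENNRealPowers

lemma ofReal_rpow_neg_mul_rpow {μ a : ℝ} (hμ : 0 < μ) (ha : 0 ≤ a) (D : ℝ≥0∞) :
    ENNReal.ofReal (μ ^ (-a)) * D ^ a = (D / ENNReal.ofReal μ) ^ a := by
  rw [ENNReal.div_rpow_of_nonneg _ _ ha, ← ENNReal.ofReal_rpow_of_pos hμ, ENNReal.rpow_neg,
    mul_comm, div_eq_mul_inv]

/- If `x ≤ y ^ r` the first term dominates, otherwise the second one does. -/
lemma rpow_mul_rpow_le_add {a b r s d : ℝ} (hb : 0 < b) (hr : 0 < r) (hs : 0 ≤ s) (hsa : s ≤ a)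
    (hd : 0 ≤ d) (x y : ℝ≥0∞) :
    x ^ a * y ^ b ≤ x ^ (a - s) * y ^ (b + r * s) + x ^ (a + d) * y ^ (b - r * d) := by
  rcases le_or_gt x (y ^ r) with hxy | hxy
  · calc x ^ a * y ^ b
        = x ^ (a - s) * x ^ s * y ^ b := by
          rw [← ENNReal.rpow_add_of_nonneg _ _ (sub_nonneg.2 hsa) hs, sub_add_cancel]
      _ ≤ x ^ (a - s) * (y ^ r) ^ s * y ^ b := by gcongr
      _ = x ^ (a - s) * y ^ (b + r * s) := by
          rw [← ENNReal.rpow_mul, mul_assoc, ← ENNReal.rpow_add_of_nonneg _ _ (by positivity) hb.le,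
            add_comm b]
      _ ≤ _ := le_self_add
  · have hy_top : y ≠ ⊤ := by
      rintro rfl
      simp [hr] at hxy
    have hy : y ^ b ≤ (y ^ r) ^ d * y ^ (b - r * d) := by
      rcases eq_or_ne y 0 with rfl | hy0
      · simp [hb]
      · rw [← ENNReal.rpow_mul, ← ENNReal.rpow_add _ _ hy0 hy_top, add_sub_cancel]
    calc x ^ a * y ^ b
        ≤ x ^ a * ((y ^ r) ^ d * y ^ (b - r * d)) := by gcongr
      _ ≤ x ^ a * (x ^ d * y ^ (b - r * d)) := by gcongr
      _ = x ^ (a + d) * y ^ (b - r * d) := by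
          rw [ENNReal.rpow_add_of_nonneg _ _ (hs.trans hsa) hd, mul_assoc]
      _ ≤ _ := le_add_self

lemma ofReal_rpow_mul_rpow_mul_rpow_le_add {μ δ : ℝ} (hμ : 0 < μ) (hδ : 0 ≤ δ) (D E : ℝ≥0∞) :
    ENNReal.ofReal (μ ^ (-(1 / 4 : ℝ))) * D ^ (1 / 4 : ℝ) * E ^ (1 / 2 : ℝ) ≤
      ENNReal.ofReal (μ ^ (-(1 / 8 : ℝ))) * D ^ (1 / 8 : ℝ) * E ^ (3 / 4 : ℝ) +
        ENNReal.ofReal (μ ^ (-(1 / 4 : ℝ) - δ)) * D ^ (1 / 4 + δ) * E ^ (1 / 2 - 2 * δ) := by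
  rw [← neg_add', ofReal_rpow_neg_mul_rpow hμ (a := 1 / 4) (by norm_num),
    ofReal_rpow_neg_mul_rpow hμ (a := 1 / 8) (by norm_num),
    ofReal_rpow_neg_mul_rpow hμ (a := 1 / 4 + δ) (by positivity)]
  convert! rpow_mul_rpow_le_add (a := 1 / 4) (b := 1 / 2) (r := 2) (s := 1 / 8) (by norm_num)
    (by norm_num) (by norm_num) (by norm_num) hδ (D / ENNReal.ofReal μ) E using 4 <;> norm_num

end ENNRealPowers

section Weights

lemma jap_pos (k : ℝ) : 0 < jap k := Real.sqrt_pos.2 (by positivity)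

lemma one_le_jap (k : ℝ) : 1 ≤ jap k := Real.one_le_sqrt.2 (by nlinarith [sq_nonneg k])

@[fun_prop]
lemma measurable_jap : Measurable jap := by
  unfold jap
  fun_prop

lemma jap_rpow (a k : ℝ) : jap k ^ a = (1 + k ^ 2) ^ (a / 2) := by
  rw [jap, Real.sqrt_eq_rpow, ← Real.rpow_mul (by positivity)]
  ring_nf

lemma Aw_nonneg {μ : ℝ} (hμ : 0 ≤ μ) (k : ℝ) : 0 ≤ Aw μ k := by
  unfold Aw
  split_ifs <;> positivity

lemma Aw_le_one {μ : ℝ} (hμ : 0 ≤ μ) (k : ℝ) : Aw μ k ≤ 1 := by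
  unfold Aw
  split_ifs with hk
  · exact le_rfl
  · rw [neg_div, Real.rpow_neg (abs_nonneg k), ← div_eq_mul_inv]
    exact div_le_one_of_le₀ (Real.rpow_le_rpow hμ (not_lt.1 hk) (by norm_num)) (by positivity)

lemma integrable_inv_sq_jap_rpow_mul_min {a b : ℝ} (ha : 1 / 2 < a) (hb₀ : 0 ≤ b)
    (hb : b < 1 / 2) :
    Integrable fun k : ℝ => ((jap k ^ a * min (|k| ^ b) 1) ^ 2)⁻¹ := by
  have h_ball : IntegrableOn (fun k : ℝ => ((jap k ^ a * min (|k| ^ b) 1) ^ 2)⁻¹)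
      (Metric.ball 0 1) := by
    refine integrableOn_ball_of_norm_le_rpow (C := 1) (α := 2 * b) (by simp)
      (by simp only [Module.finrank_self, Nat.cast_one]; linarith) ?_
      (by fun_prop : Measurable _).aestronglyMeasurable
    filter_upwards [ae_restrict_mem Metric.isOpen_ball.measurableSet,
      ae_restrict_of_ae (Measure.ae_ne volume 0)] with k hk hk0
    have hk_lt : |k| < 1 := by simpa using hk
    have hk_pos : 0 < |k| := abs_pos.2 hk0
    rw [min_eq_left (Real.rpow_le_one hk_pos.le hk_lt.le hb₀), Real.norm_of_nonneg (by positivity),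
      one_mul, Real.norm_eq_abs, Real.rpow_neg hk_pos.le, mul_comm 2 b,
      Real.rpow_mul hk_pos.le, Real.rpow_two]
    gcongr
    exact le_mul_of_one_le_left (by positivity) (Real.one_le_rpow (one_le_jap k) (by linarith))
  have h_compl : IntegrableOn (fun k : ℝ => ((jap k ^ a * min (|k| ^ b) 1) ^ 2)⁻¹)
      (Metric.ball 0 1)ᶜ := by
    have h_jap : Integrable fun k : ℝ => (1 + ‖k‖ ^ 2) ^ (-(2 * a) / 2) :=
      integrable_rpow_neg_one_add_norm_sq
        (by simp only [Module.finrank_self, Nat.cast_one]; linarith)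
    refine h_jap.integrableOn.congr_fun (fun k hk => ?_) Metric.isOpen_ball.measurableSet.compl
    have hk_ge : 1 ≤ |k| := by simpa using hk
    dsimp only
    rw [min_eq_right (Real.one_le_rpow hk_ge hb₀), mul_one, Real.norm_eq_abs, sq_abs,
      ← jap_rpow, Real.rpow_neg (jap_pos k).le, mul_comm 2 a, Real.rpow_mul (jap_pos k).le,
      Real.rpow_two]
  simpa using h_ball.union h_compl

end Weights

section Norms

lemma L1n_mono {w w' : ℝ → ℝ → ℝ} (h : ∀ k η, w k η ≤ w' k η) (Z : ℝ × ℝ → ℂ) :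
    L1n w Z ≤ L1n w' Z := by
  unfold L1n
  gcongr with k η
  exact h k η

lemma L2L1n_mono {w w' : ℝ → ℝ → ℝ} (h : ∀ k η, w k η ≤ w' k η) (Z : ℝ × ℝ → ℂ) :
    L2L1n w Z ≤ L2L1n w' Z := by
  unfold L2L1n
  gcongr with k η
  exact h k η

variable {Z : ℝ × ℝ → ℂ}

lemma L1n_le_mul_L2L1n {ρ : ℝ → ℝ} {w : ℝ → ℝ → ℝ} (hρ_nonneg : ∀ k, 0 ≤ ρ k)
    (hρ_ne : ∀ᵐ k, ρ k ≠ 0) (hρ_int : Integrable fun k => (ρ k ^ 2)⁻¹)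
    (hw : Measurable (Function.uncurry w)) (hZ : Measurable Z) :
    L1n w Z ≤ ENNReal.ofReal √(∫ k, (ρ k ^ 2)⁻¹) * L2L1n (fun k η => ρ k * w k η) Z := by
  have h_inner : Measurable fun k => ∫⁻ η, ENNReal.ofReal (w k η) * (‖Z (k, η)‖₊ : ℝ≥0∞) := by
    have : Measurable fun y : ℝ × ℝ =>
        ENNReal.ofReal (Function.uncurry w y) * (‖Z y‖₊ : ℝ≥0∞) := by fun_prop
    exact this.lintegral_prod_right'
  have h_pull : ∀ k, ENNReal.ofReal (ρ k ^ 2) *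
        (∫⁻ η, ENNReal.ofReal (w k η) * (‖Z (k, η)‖₊ : ℝ≥0∞)) ^ 2 =
      (∫⁻ η, ENNReal.ofReal (ρ k * w k η) * (‖Z (k, η)‖₊ : ℝ≥0∞)) ^ 2 := by
    intro k
    rw [ENNReal.ofReal_pow (hρ_nonneg k), ← mul_pow,
      ← lintegral_const_mul' _ _ ENNReal.ofReal_ne_top]
    simp only [ENNReal.ofReal_mul (hρ_nonneg k), mul_assoc]
  have h_sq := sq_lintegral_le_integral_inv_mul
    (hρ_ne.mono fun k hk => (by positivity : 0 < ρ k ^ 2)) hρ_int h_inner.aemeasurable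
  simp only [h_pull] at h_sq
  have h_root := ENNReal.rpow_le_rpow h_sq (by norm_num : (0 : ℝ) ≤ 1 / 2)
  rwa [← ENNReal.rpow_two, ← ENNReal.rpow_mul, mul_one_div_cancel two_ne_zero, ENNReal.rpow_one,
    ENNReal.mul_rpow_of_nonneg _ _ (by norm_num),
    ENNReal.ofReal_rpow_of_nonneg (integral_nonneg fun k => by positivity) (by norm_num),
    ← Real.sqrt_eq_rpow] at h_root

lemma L2L1n_le_sqrt_L2n_mul_sqrt_L2n {w : ℝ → ℝ → ℝ} {c : ℝ → ℝ}
    (hw : Measurable (Function.uncurry w)) (hc : Measurable c) (hZ : Measurable Z) :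
    L2L1n w Z ≤ ENNReal.ofReal √(2 * π) * (L2n w Z ^ (1 / 2 : ℝ) *
      L2n (fun k η => w k η * |η - c k|) Z ^ (1 / 2 : ℝ)) := by
  have hf : Measurable (Function.uncurry fun k η =>
      ENNReal.ofReal (w k η) * (‖Z (k, η)‖₊ : ℝ≥0∞)) := by
    have : Measurable fun y : ℝ × ℝ =>
        ENNReal.ofReal (Function.uncurry w y) * (‖Z y‖₊ : ℝ≥0∞) := by fun_prop
    exact this
  have h_moment : ∀ k η, ENNReal.ofReal ((η - c k) ^ 2) *
        (ENNReal.ofReal (w k η) * (‖Z (k, η)‖₊ : ℝ≥0∞)) ^ 2 =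
      (ENNReal.ofReal (w k η * |η - c k|) * (‖Z (k, η)‖₊ : ℝ≥0∞)) ^ 2 := by
    intro k η
    rw [← sq_abs, ENNReal.ofReal_pow (abs_nonneg _), ENNReal.ofReal_mul' (abs_nonneg _)]
    ring
  have h_sq := lintegral_sq_lintegral_le (ν := volume) hf hc
  have h_root := ENNReal.rpow_le_rpow h_sq (by norm_num : (0 : ℝ) ≤ 1 / 2)
  rw [ENNReal.mul_rpow_of_nonneg _ _ (by norm_num), ENNReal.mul_rpow_of_nonneg _ _ (by norm_num),
    ENNReal.ofReal_rpow_of_pos (by positivity), ← Real.sqrt_eq_rpow] at h_root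
  simpa only [h_moment, L2L1n, L2n] using h_root

end Norms

section Estimates

lemma exists_L1n_le_mul_L2L1n {m : ℝ} (hm : 0 < m) :
    ∃ C : ℝ, 1 ≤ C ∧ ∀ Z : ℝ × ℝ → ℂ, Measurable Z →
      L1n (fun k _ => jap k ^ (-(1 : ℝ) / 2)) Z ≤
        ENNReal.ofReal C * L2L1n (fun k _ => jap k ^ m * min (|k| ^ ((1 : ℝ) / 4)) 1) Z := by
  set ρ : ℝ → ℝ := fun k => jap k ^ (m + 1 / 2) * min (|k| ^ ((1 : ℝ) / 4)) 1 with hρ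
  have hρ_ne : ∀ᵐ k, ρ k ≠ 0 := by
    filter_upwards [Measure.ae_ne volume 0] with k hk
    have := jap_pos k
    have : 0 < |k| := abs_pos.2 hk
    positivity
  have hρ_int : Integrable fun k => (ρ k ^ 2)⁻¹ :=
    integrable_inv_sq_jap_rpow_mul_min (by linarith) (by norm_num) (by norm_num)
  have hρ_mul : ∀ k, ρ k * jap k ^ (-(1 : ℝ) / 2) = jap k ^ m * min (|k| ^ ((1 : ℝ) / 4)) 1 := by
    intro k
    rw [hρ, mul_right_comm, ← Real.rpow_add (jap_pos k)]
    ring_nf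
  refine ⟨max 1 √(∫ k, (ρ k ^ 2)⁻¹), le_max_left _ _, fun Z hZ => ?_⟩
  have h := L1n_le_mul_L2L1n (w := fun k _ => jap k ^ (-(1 : ℝ) / 2))
    (fun k => by have := jap_pos k; positivity) hρ_ne hρ_int (by fun_prop) hZ
  simp only [hρ_mul] at h
  exact h.trans (by gcongr; exact le_max_right _ _)

lemma L2n_mul_abs_sub_le_Dg_div {μ : ℝ} (hμ : 0 < μ) (t m : ℝ) (Z : ℝ × ℝ → ℂ) :
    L2n (fun k η => jap k ^ m * |η - k * t|) Z ≤
      (Dg t μ m Z / ENNReal.ofReal μ) ^ (1 / 2 : ℝ) := by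
  rw [Dg, mul_comm, ENNReal.mul_div_cancel_right (by simpa using hμ) ENNReal.ofReal_ne_top, L2n]
  gcongr with k η
  have hk := jap_pos k
  rw [mul_pow, ← ENNReal.ofReal_pow (by positivity), mul_pow, sq_abs, ← Real.rpow_two,
    ← Real.rpow_mul hk.le, mul_comm m 2, pw]
  gcongr
  exact le_add_of_nonneg_left (sq_nonneg k)

lemma L2L1n_jap_rpow_le {μ : ℝ} (hμ : 0 < μ) (t m : ℝ) {Z : ℝ × ℝ → ℂ} (hZ : Measurable Z) :
    L2L1n (fun k _ => jap k ^ m) Z ≤ ENNReal.ofReal √(2 * π) *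
      (ENNReal.ofReal (μ ^ (-(1 / 4 : ℝ))) * Dg t μ m Z ^ (1 / 4 : ℝ) *
        En t μ m Z ^ (1 / 2 : ℝ)) := by
  calc L2L1n (fun k _ => jap k ^ m) Z
      ≤ ENNReal.ofReal √(2 * π) * (L2n (fun k _ => jap k ^ m) Z ^ (1 / 2 : ℝ) *
          L2n (fun k η => jap k ^ m * |η - k * t|) Z ^ (1 / 2 : ℝ)) :=
        L2L1n_le_sqrt_L2n_mul_sqrt_L2n (by fun_prop) (by fun_prop) hZ
    _ ≤ ENNReal.ofReal √(2 * π) * (En t μ m Z ^ (1 / 2 : ℝ) *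
          ((Dg t μ m Z / ENNReal.ofReal μ) ^ (1 / 2 : ℝ)) ^ (1 / 2 : ℝ)) := by
        gcongr
        · exact le_self_add
        · exact L2n_mul_abs_sub_le_Dg_div hμ t m Z
    _ = _ := by
        rw [← ENNReal.rpow_mul, mul_comm (En t μ m Z ^ _),
          ofReal_rpow_neg_mul_rpow hμ (a := 1 / 4) (by norm_num)]
        norm_num

lemma L2L1n_jap_rpow_mul_min_le (m : ℝ) (Z : ℝ × ℝ → ℂ) :
    L2L1n (fun k _ => jap k ^ m * min (|k| ^ ((1 : ℝ) / 4)) 1) Z ≤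
      L2L1n (fun k _ => jap k ^ m) Z :=
  L2L1n_mono (fun k _ => mul_le_of_le_one_right (Real.rpow_nonneg (jap_pos k).le m)
    (min_le_right _ _)) Z

lemma L1n_Aw_rpow_mul_le {μ δ : ℝ} (hμ : 0 ≤ μ) (hδ : 0 ≤ δ) (Z : ℝ × ℝ → ℂ) :
    L1n (fun k _ => Aw μ k ^ (2 * δ) * jap k ^ (-(1 : ℝ) / 2)) Z ≤
      L1n (fun k _ => jap k ^ (-(1 : ℝ) / 2)) Z :=
  L1n_mono (fun k _ => mul_le_of_le_one_left (Real.rpow_nonneg (jap_pos k).le _)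
    (Real.rpow_le_one (Aw_nonneg hμ k) (Aw_le_one hμ k) (by positivity))) Z

end Estimates

theorem stmt14_general (m : ℝ) (hm : 0 < m) :
    ∃ C : ℝ, 0 < C ∧
      ∀ (δ t μ : ℝ), 0 ≤ δ → 0 < μ →
        ∀ Z : ℝ × ℝ → ℂ, Measurable Z →
          (L1n (fun k _ => jap k ^ (-(1 : ℝ) / 2)) Z
              ≤ ENNReal.ofReal C *
                  L2L1n (fun k _ => jap k ^ m * min (|k| ^ ((1 : ℝ) / 4)) 1) Z ∧
            L2L1n (fun k _ => jap k ^ m * min (|k| ^ ((1 : ℝ) / 4)) 1) Z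
              ≤ ENNReal.ofReal C *
                  (ENNReal.ofReal (μ ^ (-(1 / 4 : ℝ))) * Dg t μ m Z ^ ((1 : ℝ) / 4)
                    * (En t μ m Z ^ ((1 : ℝ) / 2)
                      + ENNReal.ofReal (μ ^ (-δ)) * Dg t μ m Z ^ δ
                          * En t μ m Z ^ ((1 : ℝ) / 2 - 2 * δ)))) ∧
          L2L1n (fun k _ => jap k ^ m) Z
            ≤ ENNReal.ofReal C *
                (ENNReal.ofReal (μ ^ (-(1 / 8 : ℝ))) * Dg t μ m Z ^ ((1 : ℝ) / 8)
                    * En t μ m Z ^ ((3 : ℝ) / 4)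
                  + ENNReal.ofReal (μ ^ (-(1 / 4 : ℝ) - δ)) * Dg t μ m Z ^ ((1 : ℝ) / 4 + δ)
                      * En t μ m Z ^ ((1 : ℝ) / 2 - 2 * δ)) ∧
          L1n (fun k _ => Aw μ k ^ (2 * δ) * jap k ^ (-(1 : ℝ) / 2)) Z
            ≤ ENNReal.ofReal C *
                (ENNReal.ofReal (μ ^ (-(1 / 4 : ℝ))) * (1 + ENNReal.ofReal (μ ^ (-δ)))
                  * Dg t μ m Z ^ ((1 : ℝ) / 4) * En t μ m Z ^ ((1 : ℝ) / 2)) := by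
  obtain ⟨C₁, hC₁, h_embed⟩ := exists_L1n_le_mul_L2L1n hm
  have h_two_pi : 1 ≤ √(2 * π) := Real.one_le_sqrt.2 (by linarith [Real.pi_gt_three])
  refine ⟨C₁ * √(2 * π), by positivity, fun δ t μ hδ hμ Z hZ => ?_⟩
  set B := ENNReal.ofReal (μ ^ (-(1 / 4 : ℝ))) * Dg t μ m Z ^ ((1 : ℝ) / 4) *
    En t μ m Z ^ ((1 : ℝ) / 2) with hB
  have h_main : L2L1n (fun k _ => jap k ^ m) Z ≤ ENNReal.ofReal √(2 * π) * B :=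
    L2L1n_jap_rpow_le hμ t m hZ
  have h_main' : L2L1n (fun k _ => jap k ^ m) Z ≤ ENNReal.ofReal (C₁ * √(2 * π)) * B :=
    h_main.trans (by gcongr; exact le_mul_of_one_le_left (by positivity) hC₁)
  have h_min := L2L1n_jap_rpow_mul_min_le m Z
  refine ⟨⟨(h_embed Z hZ).trans ?_, (h_min.trans h_main').trans ?_⟩, h_main'.trans ?_, ?_⟩
  · gcongr
    exact le_mul_of_one_le_right (by positivity) h_two_pi
  · rw [hB]
    gcongr
    exact le_self_add
  · gcongr
    exact ofReal_rpow_mul_rpow_mul_rpow_le_add hμ hδ _ _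
  · calc L1n (fun k _ => Aw μ k ^ (2 * δ) * jap k ^ (-(1 : ℝ) / 2)) Z
        ≤ ENNReal.ofReal C₁ * (ENNReal.ofReal √(2 * π) * B) :=
          (L1n_Aw_rpow_mul_le hμ.le hδ Z).trans <| (h_embed Z hZ).trans <|
            mul_le_mul_right (h_min.trans h_main) _
      _ = ENNReal.ofReal (C₁ * √(2 * π)) * B := by
          rw [ENNReal.ofReal_mul (by positivity), mul_assoc]
      _ ≤ _ := by
          rw [hB]
          gcongr
          exact le_mul_of_one_le_right zero_le le_self_add

/-- interpolation lemma for `D_γ`: there is `C = C(m,δ)` such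
that for all `t`, `μ ∈ (0,1)` and measurable `Z`, the three weighted estimates
(i)–(iii) of the lemma hold. -/
theorem stmt14 (m δ : ℝ) (hm : 0 < m) (hδ : δ ∈ Set.Ioo (0 : ℝ) (1 / 12)) :
    ∃ C : ℝ, 0 < C ∧
      ∀ (t μ : ℝ), μ ∈ Set.Ioo (0 : ℝ) 1 →
        ∀ Z : ℝ × ℝ → ℂ, Measurable Z →
          (L1n (fun k _ => jap k ^ (-(1 : ℝ) / 2)) Z
              ≤ ENNReal.ofReal C *
                  L2L1n (fun k _ => jap k ^ m * min (|k| ^ ((1 : ℝ) / 4)) 1) Z ∧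
            L2L1n (fun k _ => jap k ^ m * min (|k| ^ ((1 : ℝ) / 4)) 1) Z
              ≤ ENNReal.ofReal C *
                  (ENNReal.ofReal (μ ^ (-(1 / 4 : ℝ))) * Dg t μ m Z ^ ((1 : ℝ) / 4)
                    * (En t μ m Z ^ ((1 : ℝ) / 2)
                      + ENNReal.ofReal (μ ^ (-δ)) * Dg t μ m Z ^ δ
                          * En t μ m Z ^ ((1 : ℝ) / 2 - 2 * δ)))) ∧
          L2L1n (fun k _ => jap k ^ m) Z
            ≤ ENNReal.ofReal C *
                (ENNReal.ofReal (μ ^ (-(1 / 8 : ℝ))) * Dg t μ m Z ^ ((1 : ℝ) / 8)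
                    * En t μ m Z ^ ((3 : ℝ) / 4)
                  + ENNReal.ofReal (μ ^ (-(1 / 4 : ℝ) - δ)) * Dg t μ m Z ^ ((1 : ℝ) / 4 + δ)
                      * En t μ m Z ^ ((1 : ℝ) / 2 - 2 * δ)) ∧
          L1n (fun k _ => Aw μ k ^ (2 * δ) * jap k ^ (-(1 : ℝ) / 2)) Z
            ≤ ENNReal.ofReal C *
                (ENNReal.ofReal (μ ^ (-(1 / 4 : ℝ))) * (1 + ENNReal.ofReal (μ ^ (-δ)))
                  * Dg t μ m Z ^ ((1 : ℝ) / 4) * En t μ m Z ^ ((1 : ℝ) / 2)) := by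
  obtain ⟨C, hC, h⟩ := stmt14_general m hm
  exact ⟨C, hC, fun t μ hμ => h δ t μ hδ.1.le hμ.1⟩
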